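/- arXiv:2502.17067 — 5 statements merged into one kernel-verified Lean document; each statement's English description precedes it below -/
import Mathlib

section
/- Let N ≥ 2 and n ≥ 1 be integers, let 0 ≤ θ ≤ 1/2 and let σ ∈ ℝ satisfy θ + σ ≥ 1. Assume the vectors ω^1,…,ω^N ∈ ℝ^n and the symmetric matrices H^1,…,H^N ∈ ℝ^{n×n} satisfy Σ_{β=1}^N |ω^β|² ≤ 1 and Σ_{β=1}^N |H^β|² ≤ 1. Define J = |Σ_{β=1}^N H^β ω^β|², J₀ = Σ_{β=1}^N ⟨ω^β, Σ_{l=1}^N H^l ω^l⟩², and J₁ = Σ_{β=1}^N |H^β|². Then J − θ J₀ − σ J₁ ≤ 0 if θ ∈ [0, 1/3], and J − θ J₀ − σ J₁ ≤ max{0, (θ+1)²/(8θ) − σ} if θ ∈ (1/3, 1/2]. -/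
open Finset

lemma aux_cs {N n : ℕ} (A B : Fin N → Fin n → Fin n → ℝ) :
    (∑ β, ∑ i, ∑ j, A β i j * B β i j) ^ 2 ≤
      (∑ β, ∑ i, ∑ j, A β i j ^ 2) * (∑ β, ∑ i, ∑ j, B β i j ^ 2) := by
  have h := Finset.sum_mul_sq_le_sq_mul_sq (Finset.univ : Finset (Fin N × Fin n × Fin n))
    (fun p => A p.1 p.2.1 p.2.2) (fun p => B p.1 p.2.1 p.2.2)
  simpa only [Fintype.sum_prod_type] using h

lemma aux_scalar (θ σ J J0 J1 : ℝ) (h0 : 0 ≤ θ) (hh : θ ≤ 1/2) (hs : 1 ≤ θ + σ)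
    (hJ : 0 ≤ J) (hJ0 : 0 ≤ J0) (hJJ : J0 ≤ J) (h1 : 0 ≤ J1) (h11 : J1 ≤ 1)
    (hm : J ^ 2 ≤ J1 * ((J + J0) / 2)) :
    (θ ∈ Set.Icc (0:ℝ) (1/3) → J - θ * J0 - σ * J1 ≤ 0) ∧
      (θ ∈ Set.Ioc (1/3 : ℝ) (1/2) → J - θ * J0 - σ * J1 ≤ max 0 ((θ+1)^2/(8*θ) - σ)) := by
  rcases hJ.eq_or_lt with h | hpos
  · subst h
    have : J0 = 0 := le_antisymm hJJ hJ0
    subst this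
    have : 0 ≤ σ * J1 := mul_nonneg (by linarith) h1
    exact ⟨fun _ => by linarith, fun _ => le_max_of_le_left (by linarith)⟩
  obtain ⟨x, rfl⟩ : ∃ x, J0 = J * x := ⟨J0 / J, by field_simp⟩
  have hx0 : 0 ≤ x := nonneg_of_mul_nonneg_right hJ0 hpos
  have hx1 : x ≤ 1 := by
    by_contra hc
    push Not at hc
    nlinarith
  have hb : J ≤ J1 * ((1 + x) / 2) := by
    have : J * J ≤ J * (J1 * ((1 + x) / 2)) := by nlinarith
    exact le_of_mul_le_mul_left this hpos
  have hk : 0 ≤ 1 - θ * x := by nlinarith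
  have hmain : J - θ * (J * x) - σ * J1 ≤ J1 * ((1 + x) / 2 * (1 - θ * x) - σ) := by
    have := mul_le_mul_of_nonneg_right hb hk
    nlinarith
  refine ⟨fun ht => hmain.trans ?_, fun ht => hmain.trans ?_⟩
  · apply mul_nonpos_of_nonneg_of_nonpos h1
    have h3 := ht.2
    have e : (1 + x) / 2 * (1 - θ * x) - (1 - θ) = -((1 - x) * (1 - 2 * θ - θ * x)) / 2 := by ring
    have : 0 ≤ (1 - x) * (1 - 2 * θ - θ * x) := mul_nonneg (by linarith) (by nlinarith)
    linarith
  · have h3 := ht.1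
    have hθ : 0 < θ := by linarith
    have hf : (1 + x) / 2 * (1 - θ * x) ≤ (θ+1)^2/(8*θ) := by
      rw [le_div_iff₀ (by positivity)]
      nlinarith [sq_nonneg (2 * θ * x - (1 - θ))]
    set c := (θ+1)^2/(8*θ) - σ
    have h5 : J1 * ((1 + x) / 2 * (1 - θ * x) - σ) ≤ J1 * c :=
      mul_le_mul_of_nonneg_left (by simp only [c]; linarith) h1
    have h6 : J1 * c ≤ J1 * max 0 c := mul_le_mul_of_nonneg_left (le_max_right _ _) h1
    have h7 : J1 * max 0 c ≤ 1 * max 0 c := mul_le_mul_of_nonneg_right h11 (le_max_left _ _)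
    linarith

/-- Lemma 3.5 of the paper (algebraic lemma). -/
theorem algebra_lemma (N n : ℕ) (hN : 2 ≤ N) (hn : 1 ≤ n)
    (θ σ : ℝ) (hθ0 : 0 ≤ θ) (hθhalf : θ ≤ 1/2) (hθσ : 1 ≤ θ + σ)
    (ω : Fin N → Fin n → ℝ) (H : Fin N → Matrix (Fin n) (Fin n) ℝ)
    (hsym : ∀ β, (H β).IsSymm)
    (hω : ∑ β, ∑ j, (ω β j) ^ 2 ≤ 1)
    (hH : ∑ β, ∑ i, ∑ j, (H β i j) ^ 2 ≤ 1) :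
    let V : Fin n → ℝ := fun i => ∑ β, (H β).mulVec (ω β) i;
    let J : ℝ := ∑ i, (V i) ^ 2;
    let J0 : ℝ := ∑ β, (∑ i, ω β i * V i) ^ 2;
    let J1 : ℝ := ∑ β, ∑ i, ∑ j, (H β i j) ^ 2;
    (θ ∈ Set.Icc (0:ℝ) (1/3) → J - θ * J0 - σ * J1 ≤ 0) ∧
      (θ ∈ Set.Ioc (1/3 : ℝ) (1/2) → J - θ * J0 - σ * J1 ≤ max 0 ((θ+1)^2/(8*θ) - σ)) := by
  intro V J J0 J1
  have hJ : 0 ≤ J := Finset.sum_nonneg fun i _ => sq_nonneg _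
  have hJ0 : 0 ≤ J0 := Finset.sum_nonneg fun i _ => sq_nonneg _
  have hJ1 : 0 ≤ J1 := Finset.sum_nonneg fun _ _ => Finset.sum_nonneg fun _ _ =>
    Finset.sum_nonneg fun _ _ => sq_nonneg _
  set W : ℝ := ∑ β, ∑ j, (ω β j) ^ 2 with hW
  have hJJ : J0 ≤ J := by
    have : J0 ≤ W * J := by
      simp only [J0, hW, Finset.sum_mul]
      refine Finset.sum_le_sum fun β _ => ?_
      rw [← Finset.sum_mul]
      exact Finset.sum_mul_sq_le_sq_mul_sq _ _ _
    nlinarith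
  have e1 : J = ∑ β, ∑ i, ∑ j, H β i j * (ω β j * V i) := by
    have : J = ∑ i, (∑ β, ∑ j, H β i j * ω β j) * V i := by
      refine Finset.sum_congr rfl fun i _ => ?_
      rw [sq]
      rfl
    rw [this, Finset.sum_comm]
    refine Finset.sum_congr rfl fun i _ => ?_
    rw [Finset.sum_mul]
    refine Finset.sum_congr rfl fun β _ => ?_
    rw [Finset.sum_mul]
    exact Finset.sum_congr rfl fun j _ => by ring
  have e2 : J = ∑ β, ∑ i, ∑ j, H β i j * (ω β i * V j) := by
    rw [e1]
    refine Finset.sum_congr rfl fun β _ => ?_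
    rw [Finset.sum_comm]
    refine Finset.sum_congr rfl fun i _ => Finset.sum_congr rfl fun j _ => ?_
    rw [(hsym β).apply]
  have e3 : J = ∑ β, ∑ i, ∑ j, H β i j * ((ω β j * V i + ω β i * V j) / 2) := by
    have : J = (J + J) / 2 := by ring
    rw [this]
    nth_rewrite 1 [e1]
    rw [e2]
    simp only [← Finset.sum_add_distrib, Finset.sum_div]
    exact Finset.sum_congr rfl fun β _ => Finset.sum_congr rfl fun i _ =>
      Finset.sum_congr rfl fun j _ => by ring
  have e4 : ∑ β, ∑ i, ∑ j, ((ω β j * V i + ω β i * V j) / 2) ^ 2 = (W * J + J0) / 2 := by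
    simp only [J0, hW, Finset.sum_mul, ← Finset.sum_add_distrib, Finset.sum_div]
    refine Finset.sum_congr rfl fun β _ => ?_
    have a1 : ∑ i, ∑ j, (ω β j) ^ 2 * (V i) ^ 2 = (∑ j, (ω β j) ^ 2) * J := by
      rw [Finset.sum_comm, Finset.sum_mul_sum]
    have a2 : ∑ i, ∑ j, (ω β i) ^ 2 * (V j) ^ 2 = (∑ j, (ω β j) ^ 2) * J := by
      rw [Finset.sum_mul_sum]
    have a3 : ∑ i, ∑ j, (ω β i * V i) * (ω β j * V j) = (∑ i, ω β i * V i) ^ 2 := by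
      rw [sq, Finset.sum_mul_sum]
    have a4 : ∑ i, ∑ j, ((ω β j * V i + ω β i * V j) / 2) ^ 2 =
        (∑ i, ∑ j, (ω β j) ^ 2 * (V i) ^ 2) / 4 + (∑ i, ∑ j, (ω β i) ^ 2 * (V j) ^ 2) / 4
        + (∑ i, ∑ j, (ω β i * V i) * (ω β j * V j)) / 2 := by
      simp only [← Finset.sum_add_distrib, Finset.sum_div]
      exact Finset.sum_congr rfl fun i _ => Finset.sum_congr rfl fun j _ => by ring
    rw [a4, a1, a2, a3, ← Finset.sum_mul]
    ring
  have hm : J ^ 2 ≤ J1 * ((J + J0) / 2) := by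
    have h := aux_cs (fun β => H β) (fun β i j => (ω β j * V i + ω β i * V j) / 2)
    rw [← e3, e4] at h
    refine h.trans (mul_le_mul_of_nonneg_left ?_ hJ1)
    nlinarith
  exact aux_scalar θ σ J J0 J1 hθ0 hθhalf hθσ hJ hJ0 hJJ hJ1 hH hm
end

section
/- Let p ∈ (1, 3/2) and α ∈ ((p−2)/(3p−5), 1). Then 1 + (α(p−2) + p − 2 − α)²/(8α(p−2)) > 0 if and only if α < h(p), where h(p) = (2−p)(p + 2√(2(p−1)) + 1)/(p−3)². -/
/-- Positivity of `K_N(p,α)` in the first case is equivalent to `α < h(p)`. -/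
theorem KN_pos_iff (p α : ℝ) (hp1 : 1 < p) (hp2 : p < 3/2)
    (hα1 : (p - 2) / (3*p - 5) < α) (hα2 : α < 1) :
    0 < 1 + (α * (p - 2) + p - 2 - α)^2 / (8 * α * (p - 2)) ↔
      α < (2 - p) * (p + 2 * Real.sqrt (2 * (p - 1)) + 1) / (p - 3)^2 := by
  have hs0 : 0 < Real.sqrt (2 * (p - 1)) := Real.sqrt_pos.mpr (by linarith)
  have hsq : Real.sqrt (2 * (p - 1)) ^ 2 = 2 * (p - 1) := Real.sq_sqrt (by linarith)
  set s := Real.sqrt (2 * (p - 1)) with hs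
  clear_value s
  have hs1 : s < 1 := by nlinarith
  have hp : p = 1 + s^2/2 := by linarith
  clear hs hsq
  subst hp
  have hα0 : 0 < α := lt_trans (div_pos_of_neg_of_neg (by linarith) (by linarith)) hα1
  rw [div_lt_iff_of_neg (by linarith)] at hα1
  have hlow : 0 < α * (2+s)^2 - (2 - s^2) := by nlinarith [mul_pos hα0 hs0, mul_pos hα0 (pow_pos hs0 2)]
  have e1 : 1 + (α * (1 + s^2/2 - 2) + (1 + s^2/2) - 2 - α)^2 / (8 * α * (1 + s^2/2 - 2))
      = ((2 - s^2) - α*(2-s)^2) * (α * (2+s)^2 - (2 - s^2)) / (16 * α * (2 - s^2)) := by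
    have h1 : (1 + s^2/2 - 2) ≠ 0 := by linarith
    have h2 : 2 - s^2 ≠ 0 := by intro h; apply h1; linarith
    have h3 : 8 * α * (1 + s^2/2 - 2) = -(4 * α * (2 - s^2)) := by ring
    rw [h3]
    field_simp
    ring
  have e2 : (2 - (1 + s^2/2)) * (1 + s^2/2 + 2 * s + 1) / (1 + s^2/2 - 3)^2
      = (2 - s^2) / (2-s)^2 := by
    have h1 : (1 + s^2/2 - 3)  = -((2-s)*(2+s)/2) := by ring
    have h2 : 2 - s ≠ 0 := by linarith
    have h3 : 2 + s ≠ 0 := by linarith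
    rw [h1]
    field_simp
    ring
  have hq : 0 < 2 - s^2 := by linarith
  have hd : 0 < 16 * α * (2 - s^2) := by positivity
  have hd2 : 0 < (2 - s)^2 := by nlinarith
  rw [e1, e2, div_pos_iff_of_pos_right hd, lt_div_iff₀ hd2,
    mul_pos_iff_of_pos_right hlow, sub_pos]
end

section
/- For every p ∈ (1, 3/2), one has h(p) > (p−2)/(3p−5), where h(p) = (2−p)(p + 2√(2(p−1)) + 1)/(p−3)². -/
/-- For `p ∈ (1, 3/2)`, `h(p) > (p−2)/(3p−5)`. -/
theorem h_gt_threshold (p : ℝ) (hp1 : 1 < p) (hp2 : p < 3/2) :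
    (p - 2) / (3*p - 5) < (2 - p) * (p + 2 * Real.sqrt (2 * (p - 1)) + 1) / (p - 3)^2 := by
  have hs0 : 0 < Real.sqrt (2 * (p - 1)) := Real.sqrt_pos.mpr (by linarith)
  have hsq : Real.sqrt (2 * (p - 1)) ^ 2 = 2 * (p - 1) := Real.sq_sqrt (by linarith)
  generalize Real.sqrt (2 * (p - 1)) = s at hs0 hsq ⊢
  have hs1 : s < 1 := by nlinarith
  have hp : p = 1 + s ^ 2 / 2 := by linarith
  have e : (p - 2) / (3*p - 5) = (2 - p) / (5 - 3*p) := by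
    rw [← neg_div_neg_eq]; congr 1 <;> ring
  have h3 : 0 < (p - 3) ^ 2 := by nlinarith
  rw [e, div_lt_div_iff₀ (by linarith) h3, mul_assoc]
  apply mul_lt_mul_of_pos_left _ (by linarith)
  have h2 : s ^ 2 < 1 := by nlinarith
  have h4 : s ^ 3 < 1 := by nlinarith
  have key : 0 < s * (4 - 3 * s ^ 2 - s ^ 3) := mul_pos hs0 (by linarith)
  subst hp
  nlinarith [key]
end

section
/- Let n ≥ 1, N ≥ 2 be integers, let 1 < p ≤ 2 and α ∈ [0,1), let ε > 0, let w^1,…,w^N ∈ ℝ^n be vectors and H^1,…,H^N ∈ ℝ^{n×n} be symmetric matrices. Set s = ε + Σ_{β=1}^N |w^β|² and V = Σ_{β=1}^N H^β w^β. Then Σ_{β=1}^N |H^β|² + (p−2−α) |V|²/s − α(p−2) (Σ_{k=1}^N ⟨w^k, V⟩²)/s² ≥ K_N(p,α) · Σ_{β=1}^N |H^β|², where K_N(p,α) = 1 + (α(p−2)+p−2−α)²/(8α(p−2)) if p ∈ (1,3/2) and α ∈ ((p−2)/(3p−5), 1); K_N(p,α) = (p−1)(1−α) if p ∈ (1,3/2)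 and α ∈ [0, (p−2)/(3p−5)]; and K_N(p,α) = (p−1)(1−α) if p ∈ [3/2, 2]. -/
open Finset

lemma aux_key (n N : ℕ) (w : Fin N → Fin n → ℝ) (H : Fin N → Matrix (Fin n) (Fin n) ℝ)
    (hsym : ∀ β, (H β).IsSymm) (V : Fin n → ℝ)
    (hV : ∀ i, V i = ∑ β, (H β).mulVec (w β) i) (t : ℝ) :
    0 ≤ (∑ β, ∑ i, ∑ j, (H β i j) ^ 2) - 2 * t * (∑ i, (V i) ^ 2)
      + t ^ 2 / 2 * ((∑ β, ∑ j, (w β j) ^ 2) * (∑ i, (V i) ^ 2)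
        + ∑ k, (∑ i, w k i * V i) ^ 2) := by
  have h0 : 0 ≤ ∑ β, ∑ i, ∑ j, (H β i j - t / 2 * (V i * w β j + w β i * V j)) ^ 2 := by
    positivity
  have e1 : ∑ β, ∑ i, ∑ j, H β i j * (V i * w β j) = ∑ i, (V i) ^ 2 := by
    rw [Finset.sum_comm]
    refine Finset.sum_congr rfl fun i _ => ?_
    rw [sq]
    nth_rw 3 [hV i]
    rw [Finset.mul_sum]
    refine Finset.sum_congr rfl fun β _ => ?_
    simp only [Matrix.mulVec, dotProduct, Finset.mul_sum]
    refine Finset.sum_congr rfl fun j _ => ?_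
    ring
  have e2 : ∑ β, ∑ i, ∑ j, H β i j * (w β i * V j) = ∑ i, (V i) ^ 2 := by
    rw [← e1]
    refine Finset.sum_congr rfl fun β _ => ?_
    rw [Finset.sum_comm]
    refine Finset.sum_congr rfl fun j _ => Finset.sum_congr rfl fun i _ => ?_
    rw [(hsym β).apply j i]
    ring
  have e3 : ∑ β, ∑ i, ∑ j, (V i) ^ 2 * (w β j) ^ 2
      = (∑ β, ∑ j, (w β j) ^ 2) * (∑ i, (V i) ^ 2) := by
    rw [Finset.sum_mul]
    refine Finset.sum_congr rfl fun β _ => ?_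
    rw [mul_comm, Finset.sum_mul_sum]
  have e4 : ∑ β, ∑ i, ∑ j, (w β i) ^ 2 * (V j) ^ 2
      = (∑ β, ∑ j, (w β j) ^ 2) * (∑ i, (V i) ^ 2) := by
    rw [Finset.sum_mul]
    refine Finset.sum_congr rfl fun β _ => ?_
    rw [Finset.sum_mul_sum]
  have e5 : ∑ β, ∑ i, ∑ j, (w β i * V i) * (w β j * V j)
      = ∑ k, (∑ i, w k i * V i) ^ 2 := by
    refine Finset.sum_congr rfl fun β _ => ?_
    rw [sq, Finset.sum_mul_sum]
  have e : ∑ β, ∑ i, ∑ j, (H β i j - t / 2 * (V i * w β j + w β i * V j)) ^ 2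
      = (∑ β, ∑ i, ∑ j, (H β i j) ^ 2)
        - t * (∑ β, ∑ i, ∑ j, H β i j * (V i * w β j))
        - t * (∑ β, ∑ i, ∑ j, H β i j * (w β i * V j))
        + t ^ 2 / 4 * (∑ β, ∑ i, ∑ j, (V i) ^ 2 * (w β j) ^ 2)
        + t ^ 2 / 4 * (∑ β, ∑ i, ∑ j, (w β i) ^ 2 * (V j) ^ 2)
        + t ^ 2 / 2 * (∑ β, ∑ i, ∑ j, (w β i * V i) * (w β j * V j)) := by
    simp only [Finset.mul_sum, ← Finset.sum_add_distrib, ← Finset.sum_sub_distrib]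
    refine Finset.sum_congr rfl fun β _ => Finset.sum_congr rfl fun i _ =>
      Finset.sum_congr rfl fun j _ => ?_
    ring
  rw [e, e1, e2, e3, e4, e5] at h0
  linarith

/-- Pointwise lower bound `𝓘 ≥ K_N(p,α) ‖D²u‖²` for `1 < p ≤ 2`. -/
theorem pointwise_bound_p_le_two (n N : ℕ) (hn : 1 ≤ n) (hN : 2 ≤ N)
    (p α ε : ℝ) (hp1 : 1 < p) (hp2 : p ≤ 2) (hα0 : 0 ≤ α) (hα1 : α < 1) (hε : 0 < ε)
    (w : Fin N → Fin n → ℝ) (H : Fin N → Matrix (Fin n) (Fin n) ℝ)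
    (hsym : ∀ β, (H β).IsSymm) :
    let s : ℝ := ε + ∑ β, ∑ j, (w β j) ^ 2;
    let V : Fin n → ℝ := fun i => ∑ β, (H β).mulVec (w β) i;
    let KN : ℝ :=
      if p < 3/2 ∧ (p - 2) / (3*p - 5) < α then
        1 + (α * (p - 2) + p - 2 - α)^2 / (8 * α * (p - 2))
      else (p - 1) * (1 - α);
    (∑ β, ∑ i, ∑ j, (H β i j) ^ 2) + (p - 2 - α) * (∑ i, (V i) ^ 2) / s
        - α * (p - 2) * (∑ k, (∑ i, w k i * V i) ^ 2) / s ^ 2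
      ≥ KN * ∑ β, ∑ i, ∑ j, (H β i j) ^ 2 := by
  intro s V KN
  have key := aux_key n N w H hsym V (fun i => rfl)
  have hT0 : 0 ≤ ∑ β, ∑ j, (w β j) ^ 2 := by positivity
  have hs : 0 < s := by positivity
  have hTs : ∑ β, ∑ j, (w β j) ^ 2 ≤ s := by simp only [s]; linarith
  have hBA : ∑ k, (∑ i, w k i * V i) ^ 2 ≤ (∑ β, ∑ j, (w β j) ^ 2) * (∑ i, (V i) ^ 2) := by
    rw [Finset.sum_mul]
    exact Finset.sum_le_sum fun k _ => Finset.sum_mul_sq_le_sq_mul_sq _ _ _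
  have hA0 : 0 ≤ ∑ i, (V i) ^ 2 := by positivity
  have hB0 : 0 ≤ ∑ k, (∑ i, w k i * V i) ^ 2 := by positivity
  clear_value s V
  simp only [KN]
  clear KN
  generalize (∑ β, ∑ i, ∑ j, (H β i j) ^ 2) = h at *
  generalize (∑ β, ∑ j, (w β j) ^ 2) = T at *
  generalize (∑ k, (∑ i, w k i * V i) ^ 2) = B at *
  generalize (∑ i, (V i) ^ 2) = A at *
  have hTA : T * A ≤ s * A := mul_le_mul_of_nonneg_right hTs hA0
  obtain ⟨a, ha⟩ : ∃ a, a = A / s := ⟨_, rfl⟩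
  obtain ⟨b, hb⟩ : ∃ b, b = B / s ^ 2 := ⟨_, rfl⟩
  have hAe : A = a * s := by rw [ha]; field_simp
  have hBe : B = b * s ^ 2 := by rw [hb]; field_simp
  have hba : b ≤ a := by
    rw [ha, hb, div_le_div_iff₀ (by positivity) hs]
    nlinarith
  have ha0 : 0 ≤ a := by rw [ha]; positivity
  have hb0 : 0 ≤ b := by rw [hb]; positivity
  have key2 : ∀ c : ℝ, 0 ≤ h - 2 * c * a + c ^ 2 / 2 * (a + b) := by
    intro c
    have k1 := key (c / s)
    have k2 : (c / s) ^ 2 / 2 * (T * A + B) ≤ (c / s) ^ 2 / 2 * (s * A + B) := by gcongr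
    have k3 : (c / s) ^ 2 / 2 * (s * A + B) = c ^ 2 / 2 * (a + b) := by
      rw [hAe, hBe]; field_simp
    have k4 : 2 * (c / s) * A = 2 * c * a := by rw [hAe]; field_simp
    linarith
  rw [mul_div_assoc, mul_div_assoc, ← ha, ← hb]
  obtain ⟨q, hq⟩ : ∃ q, q = 2 - p := ⟨_, rfl⟩
  obtain rfl : p = 2 - q := by linarith
  split_ifs with hc
  · obtain ⟨c1, c2⟩ := hc
    have hq2 : 1 / 2 < q := by linarith
    have hαp : 0 < α := lt_of_le_of_lt
      (div_nonneg_of_nonpos (by linarith) (by linarith)) c2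
    have hD : 0 < q + α + α * q := by positivity
    have hk := key2 (4 * α * q / (q + α + α * q))
    have hC : 0 ≤ (q + α + α * q) ^ 2 / (8 * α * q) := by positivity
    have hm := mul_nonneg hC hk
    have e : (q + α + α * q) ^ 2 / (8 * α * q) * (h - 2 * (4 * α * q / (q + α + α * q)) * a
        + (4 * α * q / (q + α + α * q)) ^ 2 / 2 * (a + b))
        = (q + α + α * q) ^ 2 / (8 * α * q) * h - (q + α + α * q) * a + α * q * (a + b) := by
      field_simp
      ring
    have e' : (α * (2 - q - 2) + (2 - q) - 2 - α) ^ 2 / (8 * α * (2 - q - 2))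
        = - ((q + α + α * q) ^ 2 / (8 * α * q)) := by
      rw [← div_neg]
      congr 1 <;> ring
    rw [e] at hm
    rw [e']
    linarith
  · have hcond : 3 * α * q ≤ q + α := by
      by_cases h1 : 2 - q < 3 / 2
      · have h2 : α ≤ (2 - q - 2) / (3 * (2 - q) - 5) := by
          by_contra h3
          exact hc ⟨h1, not_le.mp h3⟩
        rw [le_div_iff_of_neg (by linarith)] at h2
        linarith
      · push Not at h1
        nlinarith
    have hk := key2 1
    have hC : 0 ≤ q + α - α * q := by nlinarith
    have hm := mul_nonneg hC hk
    have hn := mul_nonneg (sub_nonneg.mpr hcond) (sub_nonneg.mpr hba)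
    nlinarith
end

section
/- Let n ≥ 1, N ≥ 1 be integers, let p > 2 and α ∈ [0,1), let ε > 0, let w^1,…,w^N ∈ ℝ^n be vectors and H^1,…,H^N ∈ ℝ^{n×n} be symmetric matrices. Set s = ε + Σ_{β=1}^N |w^β|² and V = Σ_{β=1}^N H^β w^β. Then Σ_{β=1}^N |H^β|² + (p−2−α) |V|²/s − α(p−2) (Σ_{k=1}^N ⟨w^k, V⟩²)/s² ≥ min{1, (p−1)(1−α)} · Σ_{β=1}^N |H^β|². -/
open Finset

/-- Pointwise lower bound for `p > 2`. -/
theorem pointwise_bound_p_gt_two (n N : ℕ) (hn : 1 ≤ n) (hN : 1 ≤ N)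
    (p α ε : ℝ) (hp : 2 < p) (hα0 : 0 ≤ α) (hα1 : α < 1) (hε : 0 < ε)
    (w : Fin N → Fin n → ℝ) (H : Fin N → Matrix (Fin n) (Fin n) ℝ)
    (hsym : ∀ β, (H β).IsSymm) :
    let s : ℝ := ε + ∑ β, ∑ j, (w β j) ^ 2;
    let V : Fin n → ℝ := fun i => ∑ β, (H β).mulVec (w β) i;
    (∑ β, ∑ i, ∑ j, (H β i j) ^ 2) + (p - 2 - α) * (∑ i, (V i) ^ 2) / s
        - α * (p - 2) * (∑ k, (∑ i, w k i * V i) ^ 2) / s ^ 2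
      ≥ min 1 ((p - 1) * (1 - α)) * ∑ β, ∑ i, ∑ j, (H β i j) ^ 2 := by
  intro s V
  set h : ℝ := ∑ β, ∑ i, ∑ j, (H β i j) ^ 2 with hh
  set v : ℝ := ∑ i, (V i) ^ 2 with hv
  set t : ℝ := ∑ k, (∑ i, w k i * V i) ^ 2 with ht
  set W : ℝ := ∑ β, ∑ j, (w β j) ^ 2 with hW
  have hs : s = ε + W := rfl
  have hW0 : 0 ≤ W := by positivity
  have hv0 : 0 ≤ v := by positivity
  have hh0 : 0 ≤ h := by positivity
  have hs0 : 0 < s := by rw [hs]; positivity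
  have h1 : v ≤ h * W := by
    have e : h = ∑ i, ∑ β, ∑ j, (H β i j) ^ 2 := Finset.sum_comm
    rw [e, hv, Finset.sum_mul]
    refine Finset.sum_le_sum fun i _ => ?_
    have := Finset.sum_mul_sq_le_sq_mul_sq (Finset.univ : Finset (Fin N × Fin n))
      (fun x => H x.1 i x.2) (fun x => w x.1 x.2)
    simp only [Fintype.sum_prod_type] at this
    exact this
  have h2 : t ≤ W * v := by
    rw [ht, hW, Finset.sum_mul]
    exact Finset.sum_le_sum fun k _ => Finset.sum_mul_sq_le_sq_mul_sq _ _ _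
  have ha : v / s ≤ h := by
    rw [div_le_iff₀ hs0, hs]
    nlinarith [mul_nonneg hh0 hε.le]
  have ha0 : 0 ≤ v / s := by positivity
  have hb : t / s ^ 2 ≤ v / s := by
    rw [div_le_div_iff₀ (by positivity) hs0]
    have : t ≤ s * v := by rw [hs]; nlinarith [mul_nonneg hv0 hε.le]
    nlinarith [mul_le_mul_of_nonneg_right this hs0.le]
  rw [mul_div_assoc, mul_div_assoc]
  have h3 := mul_le_mul_of_nonneg_left hb (mul_nonneg hα0 (by linarith : 0 ≤ p - 2))
  generalize v / s = a at *
  generalize t / s ^ 2 = b at *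
  rcases le_total 1 ((p - 1) * (1 - α)) with hc | hc
  · rw [min_eq_left hc]
    nlinarith [mul_nonneg (sub_nonneg.2 hc) ha0]
  · rw [min_eq_right hc]
    nlinarith [mul_nonneg (sub_nonneg.2 hc) (sub_nonneg.2 ha)]
end
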